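/- Let T : ℝ^n → ℝ^n be nonexpansive with nonempty fixed-point set, let λ ∈ (0,1), and let (v^t)_{t∈ℕ} be a summable sequence in ℝ^n. Then the inexact Krasnosel'skii–Mann iteration x^{t+1} = x^t + λ(T(x^t) − x^t) + v^t is asymptotically regular for every x^0 ∈ ℝ^n: ‖x^{t+1} − x^t‖ → 0 as t → ∞, and equivalently the fixed-point residual satisfies ‖T(x^t) − x^t‖ → 0. -/

import Mathlib

open Filter Topology

/-!
Fix `p` with `‖T z - p‖ ≤ ‖z - p‖` for all `z`, such as a fixed point of a nonexpansive `T`.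
Strong convexity of the squared norm shows that the exact step lowers the squared distance to `p`
by at least `λ (1 - λ) ‖T x - x‖ ^ 2`. The perturbations raise the distance to `p` by at most
`∑ ‖v^t‖` in total, so the iterates stay bounded and the perturbation `v^t` raises the squared
distance by at most a constant times `‖v^t‖`. Telescoping the squared distances makes the squared
residuals summable.
-/

theorem le_add_sum_range_of_succ_le_add {M : Type*} [AddCommGroup M] [PartialOrder M]
    [IsOrderedAddMonoid M] {u d : ℕ → M} (h : ∀ t, u (t + 1) ≤ u t + d t) (n : ℕ) :
    u n ≤ u 0 + ∑ t ∈ Finset.range n, d t := by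
  rw [← sub_le_iff_le_add', ← Finset.sum_range_sub]
  exact Finset.sum_le_sum fun t _ => sub_le_iff_le_add'.2 (h t)

theorem summable_of_succ_add_le_add {u r e : ℕ → ℝ} (hu : ∀ t, 0 ≤ u t) (hr : ∀ t, 0 ≤ r t)
    (he : ∀ t, 0 ≤ e t) (hsum : Summable e) (h : ∀ t, u (t + 1) + r t ≤ u t + e t) :
    Summable r := by
  refine summable_of_sum_range_le (c := u 0 + ∑' t, e t) hr fun n => ?_
  have htelescope : u n ≤ u 0 + ∑ t ∈ Finset.range n, (e t - r t) :=
    le_add_sum_range_of_succ_le_add (fun t => by linarith [h t]) n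
  rw [Finset.sum_sub_distrib] at htelescope
  linarith [hu n, hsum.sum_le_tsum (Finset.range n) fun t _ => he t]

theorem summable_of_sq_le_sq_sub_of_succ_le_add {a b r e : ℕ → ℝ} (ha : ∀ t, 0 ≤ a t)
    (hr : ∀ t, 0 ≤ r t) (he : ∀ t, 0 ≤ e t) (hsum : Summable e)
    (hdecrease : ∀ t, b t ^ 2 ≤ a t ^ 2 - r t) (hstep : ∀ t, a (t + 1) ≤ b t + e t) :
    Summable r := by
  have hba (t : ℕ) : b t ≤ a t :=
    le_of_abs_le (abs_le_of_sq_le_sq (by linarith [hdecrease t, hr t]) (ha t))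
  set B := a 0 + ∑' t, e t
  have hbound (t : ℕ) : a t + e t ≤ B := by
    have hgrowth := le_add_sum_range_of_succ_le_add
      (fun t => (hstep t).trans (add_le_add_left (hba t) _)) t
    have hpartial := hsum.sum_le_tsum (Finset.range (t + 1)) fun t _ => he t
    rw [Finset.sum_range_succ] at hpartial
    linarith
  refine summable_of_succ_add_le_add (fun t => sq_nonneg (a t)) hr
    (fun t => mul_nonneg (mul_nonneg zero_le_two ((add_nonneg (ha t) (he t)).trans (hbound t)))
      (he t)) (hsum.mul_left (2 * B)) fun t => ?_
  have hsq : a (t + 1) ^ 2 ≤ b t ^ 2 + 2 * B * e t := calc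
    a (t + 1) ^ 2 ≤ (b t + e t) ^ 2 := pow_le_pow_left₀ (ha _) (hstep t) 2
    _ = b t ^ 2 + (2 * b t + e t) * e t := by ring
    _ ≤ b t ^ 2 + 2 * B * e t := by
      gcongr
      · exact he t
      · linarith [hba t, hbound t, he t]
  linarith [hdecrease t]

section InnerProductSpace

variable {E : Type*} [SeminormedAddCommGroup E] [InnerProductSpace ℝ E]

theorem norm_add_smul_sub_sq (c : ℝ) (u w : E) :
    ‖u + c • (w - u)‖ ^ 2 = (1 - c) * ‖u‖ ^ 2 + c * ‖w‖ ^ 2 - c * (1 - c) * ‖w - u‖ ^ 2 := by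
  rw [norm_add_sq_real, norm_sub_sq_real, norm_smul, mul_pow, Real.norm_eq_abs, sq_abs,
    norm_sub_sq_real, inner_smul_right, inner_sub_right, real_inner_self_eq_norm_sq,
    real_inner_comm]
  ring

theorem norm_add_smul_sub_sq_le {c : ℝ} (hc : 0 ≤ c) {u w : E} (h : ‖w‖ ≤ ‖u‖) :
    ‖u + c • (w - u)‖ ^ 2 ≤ ‖u‖ ^ 2 - c * (1 - c) * ‖w - u‖ ^ 2 := calc
  ‖u + c • (w - u)‖ ^ 2 = (1 - c) * ‖u‖ ^ 2 + c * ‖w‖ ^ 2 - c * (1 - c) * ‖w - u‖ ^ 2 :=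
    norm_add_smul_sub_sq c u w
  _ ≤ (1 - c) * ‖u‖ ^ 2 + c * ‖u‖ ^ 2 - c * (1 - c) * ‖w - u‖ ^ 2 := by gcongr
  _ = ‖u‖ ^ 2 - c * (1 - c) * ‖w - u‖ ^ 2 := by ring

variable {p : E} {lam : ℕ → ℝ} {v x y : ℕ → E}

theorem summable_relaxation_mul_norm_sub_sq (hy : ∀ t, ‖y t - p‖ ≤ ‖x t - p‖)
    (hlam : ∀ t, lam t ∈ Set.Icc 0 1) (hv : Summable fun t => ‖v t‖)
    (hx : ∀ t, x (t + 1) = x t + lam t • (y t - x t) + v t) :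
    Summable fun t => lam t * (1 - lam t) * ‖y t - x t‖ ^ 2 := by
  refine summable_of_sq_le_sq_sub_of_succ_le_add (a := fun t => ‖x t - p‖)
    (b := fun t => ‖x t - p + lam t • (y t - x t)‖) (e := fun t => ‖v t‖)
    (fun t => norm_nonneg _)
    (fun t => mul_nonneg (mul_nonneg (hlam t).1 (sub_nonneg.2 (hlam t).2)) (sq_nonneg _))
    (fun t => norm_nonneg _) hv (fun t => ?_) fun t => ?_
  · simpa only [sub_sub_sub_cancel_right] using norm_add_smul_sub_sq_le (hlam t).1 (hy t)
  · rw [hx t, add_sub_right_comm, add_sub_right_comm]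
    exact norm_add_le _ _

theorem tendsto_norm_sub_of_relaxation_mem_Icc {a b : ℝ} (ha : 0 < a) (hb : b < 1)
    (hy : ∀ t, ‖y t - p‖ ≤ ‖x t - p‖) (hlam : ∀ t, lam t ∈ Set.Icc a b)
    (hv : Summable fun t => ‖v t‖)
    (hx : ∀ t, x (t + 1) = x t + lam t • (y t - x t) + v t) :
    Tendsto (fun t => ‖y t - x t‖) atTop (𝓝 0) := by
  have hsum : Summable fun t => lam t * (1 - lam t) * ‖y t - x t‖ ^ 2 :=
    summable_relaxation_mul_norm_sub_sq hy
      (fun t => Set.Icc_subset_Icc ha.le hb.le (hlam t)) hv hx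
  have hsq : Summable fun t => a * (1 - b) * ‖y t - x t‖ ^ 2 := by
    refine hsum.of_nonneg_of_le (fun t => ?_) fun t => ?_
    · exact mul_nonneg (mul_nonneg ha.le (sub_nonneg.2 hb.le)) (sq_nonneg _)
    · obtain ⟨hal, hlb⟩ := hlam t
      have hcoeff : a * (1 - b) ≤ lam t * (1 - lam t) :=
        mul_le_mul hal (sub_le_sub_left hlb 1) (sub_nonneg.2 hb.le) (ha.le.trans hal)
      exact mul_le_mul_of_nonneg_right hcoeff (sq_nonneg _)
  have hne : a * (1 - b) ≠ 0 := (mul_pos ha (sub_pos.2 hb)).ne'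
  simpa using ((summable_mul_left_iff hne).1 hsq).tendsto_atTop_zero.sqrt

theorem inexact_KM_asymptotically_regular_general {T : E → E}
    (hT : ∀ z, ‖T z - p‖ ≤ ‖z - p‖) {a b : ℝ} (ha : 0 < a) (hb : b < 1)
    (hlam : ∀ t, lam t ∈ Set.Icc a b) (hv : Summable fun t => ‖v t‖)
    (hx : ∀ t, x (t + 1) = x t + lam t • (T (x t) - x t) + v t) :
    Tendsto (fun t => ‖x (t + 1) - x t‖) atTop (𝓝 0) ∧
      Tendsto (fun t => ‖T (x t) - x t‖) atTop (𝓝 0) := by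
  have hres : Tendsto (fun t => ‖T (x t) - x t‖) atTop (𝓝 0) :=
    tendsto_norm_sub_of_relaxation_mem_Icc ha hb (fun t => hT (x t)) hlam hv hx
  have hbound : Tendsto (fun t => ‖T (x t) - x t‖ + ‖v t‖) atTop (𝓝 0) := by
    simpa only [add_zero] using hres.add hv.tendsto_atTop_zero
  refine ⟨squeeze_zero (fun t => norm_nonneg _) (fun t => ?_) hbound, hres⟩
  calc ‖x (t + 1) - x t‖ = ‖lam t • (T (x t) - x t) + v t‖ := by
        rw [hx t, add_assoc, add_sub_cancel_left]
    _ ≤ ‖lam t • (T (x t) - x t)‖ + ‖v t‖ := norm_add_le _ _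
    _ = lam t * ‖T (x t) - x t‖ + ‖v t‖ := by
        rw [norm_smul_of_nonneg (ha.le.trans (hlam t).1)]
    _ ≤ ‖T (x t) - x t‖ + ‖v t‖ := by
        gcongr
        exact mul_le_of_le_one_left (norm_nonneg _) ((hlam t).2.trans hb.le)

end InnerProductSpace

/-- Asymptotic regularity of the inexact Krasnosel'skii–Mann iteration
`x^{t+1} = x^t + λ (T x^t - x^t) + v^t` with summable perturbations:
both the step lengths `‖x^{t+1} - x^t‖` and the fixed-point residuals
`‖T x^t - x^t‖` tend to zero. -/
theorem inexact_KM_asymptotically_regular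
    {n : ℕ} (T : EuclideanSpace ℝ (Fin n) → EuclideanSpace ℝ (Fin n))
    (hT : ∀ x y, ‖T x - T y‖ ≤ ‖x - y‖)
    (hfix : {p : EuclideanSpace ℝ (Fin n) | T p = p}.Nonempty)
    (lam : ℝ) (hlam0 : 0 < lam) (hlam1 : lam < 1)
    (v : ℕ → EuclideanSpace ℝ (Fin n)) (hv : Summable fun t => ‖v t‖)
    (x : ℕ → EuclideanSpace ℝ (Fin n))
    (hx : ∀ t, x (t + 1) = x t + lam • (T (x t) - x t) + v t) :
    Tendsto (fun t => ‖x (t + 1) - x t‖) atTop (𝓝 0) ∧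
      Tendsto (fun t => ‖T (x t) - x t‖) atTop (𝓝 0) := by
  obtain ⟨p, hp : T p = p⟩ := hfix
  exact inexact_KM_asymptotically_regular_general (fun z => hp ▸ hT z p) hlam0 hlam1
    (fun _ => Set.left_mem_Icc.2 le_rfl) hv hx
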